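/- arXiv:2202.01551 — 4 statements merged into one kernel-verified Lean document; each statement's English description precedes it below -/
import Mathlib

section
/- Let Ω be a nonempty finite set, P = (Ω, ≼) a partial order on Ω, and let ω : Ω → ℝ be the constant function 1. Then (P, ω) satisfies the unique decomposition property if and only if P is hierarchical. -/
/-- The ideal of the poset `Ω` generated by `B`. -/
def idl {Ω : Type*} [PartialOrder Ω] (B : Set Ω) : Set Ω := {a | ∃ b ∈ B, a ≤ b}

/-- `I` is an ideal (downward-closed subset) of the poset `Ω`. -/
def IsIdl {Ω : Type*} [PartialOrder Ω] (I : Set Ω) : Prop := ∀ a b : Ω, a ≤ b → b ∈ I → a ∈ I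

/-- `lenP y` is the largest cardinality of a chain having `y` as its greatest element. -/
noncomputable def lenP {Ω : Type*} [PartialOrder Ω] (y : Ω) : ℕ :=
  sSup {n : ℕ | ∃ c : Finset Ω, IsChain (· ≤ ·) (c : Set Ω) ∧ y ∈ c ∧ (∀ x ∈ c, x ≤ y) ∧ c.card = n}

/-- The poset `Ω` is hierarchical. -/
def Hierarchical (Ω : Type*) [PartialOrder Ω] : Prop :=
  ∀ u v : Ω, lenP u + 1 ≤ lenP v → u ≤ v

/-- `(P, ω)` satisfies the unique decomposition property. -/
def UDP {Ω : Type*} [PartialOrder Ω] (ω : Ω → ℝ) : Prop :=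
  ∀ I J : Set Ω, IsIdl I → IsIdl J → (∑ᶠ i ∈ I, ω i) = (∑ᶠ j ∈ J, ω j) →
    ∃ lam : Ω ≃o Ω, J = lam '' I ∧ ∀ i : Ω, ω (lam i) = ω i

/-!
In a hierarchical finite poset the order is determined by the length function: `x < y` if and only
if `x` has smaller length than `y`. Hence exchanging two elements of equal length is an
automorphism. If `I` and `J` are ideals, `x ∈ I \ J` and `y ∈ J \ I`, then `x` and `y` have equal
length, so such exchanges carry an ideal to any other ideal of the same cardinality, one element at
a time.

Conversely, suppose that `u` has smaller length than `v` but is not below it, with `v` minimal. In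
the ideal `S` of all elements of length at most that of `u`, replacing `u` by `v` yields an ideal
of the same cardinality. No automorphism maps it onto `S`, since automorphisms preserve length.
-/

section Length

variable {Ω : Type*} [PartialOrder Ω]

theorem lenP_map_orderIso {Ω' : Type*} [PartialOrder Ω'] (f : Ω ≃o Ω') (x : Ω) :
    lenP (f x) = lenP x := by
  unfold lenP
  congr 1
  ext n
  have isChain_map (c : Finset Ω) :
      IsChain (· ≤ ·) (f '' (c : Set Ω)) ↔ IsChain (· ≤ ·) (c : Set Ω) :=
    IsChain.image_iso_iff
  simp [f.toEquiv.finsetCongr.surjective.exists, isChain_map, f.surjective.forall]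

variable [Finite Ω]

theorem bddAbove_card_isChain_le (y : Ω) :
    BddAbove {n : ℕ | ∃ c : Finset Ω,
      IsChain (· ≤ ·) (c : Set Ω) ∧ y ∈ c ∧ (∀ x ∈ c, x ≤ y) ∧ c.card = n} := by
  have := Fintype.ofFinite Ω
  exact ⟨Fintype.card Ω, fun _ ⟨c, _, _, _, hn⟩ => hn ▸ c.card_le_univ⟩

theorem exists_isChain_card_eq_lenP (y : Ω) :
    ∃ c : Finset Ω, IsChain (· ≤ ·) (c : Set Ω) ∧ y ∈ c ∧ (∀ x ∈ c, x ≤ y) ∧ c.card = lenP y := by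
  refine Nat.sSup_mem ?_ (bddAbove_card_isChain_le y)
  exact ⟨1, {y}, by simp⟩

theorem card_le_lenP {c : Finset Ω} {y : Ω} (hc : IsChain (· ≤ ·) (c : Set Ω)) (hy : y ∈ c)
    (hle : ∀ x ∈ c, x ≤ y) : c.card ≤ lenP y :=
  le_csSup (bddAbove_card_isChain_le y) ⟨c, hc, hy, hle, rfl⟩

theorem lenP_strictMono : StrictMono (lenP : Ω → ℕ) := by
  classical
  intro x y hxy
  obtain ⟨c, hc, -, hle, hcard⟩ := exists_isChain_card_eq_lenP x
  have hlt : ∀ z ∈ c, z < y := fun z hz => (hle z hz).trans_lt hxy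
  have hgreatest : ∀ z ∈ insert y c, z ≤ y := by simpa using fun z hz => (hlt z hz).le
  have hchain : IsChain (· ≤ ·) ((insert y c : Finset Ω) : Set Ω) := by
    rw [Finset.coe_insert]
    exact hc.insert fun z hz _ => Or.inr (hlt z hz).le
  calc lenP x + 1 = (insert y c).card := by
        rw [Finset.card_insert_of_notMem fun hy => (hlt y hy).false, hcard]
    _ ≤ lenP y := card_le_lenP hchain (Finset.mem_insert_self y c) hgreatest

theorem isLowerSet_setOf_lenP_le (n : ℕ) : IsLowerSet {x : Ω | lenP x ≤ n} :=
  fun _ _ hyx hx => (lenP_strictMono.monotone hyx).trans hx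

end Length

section UniqueDecomposition

variable {Ω : Type*} [PartialOrder Ω]

theorem isIdl_iff_isLowerSet {I : Set Ω} : IsIdl I ↔ IsLowerSet I :=
  forall_comm

theorem finsum_mem_const {α M : Type*} [AddCommMonoid M] {s : Set α} (hs : s.Finite) (c : M) :
    ∑ᶠ _ ∈ s, c = s.ncard • c := by
  rw [finsum_mem_eq_finite_toFinset_sum _ hs, Finset.sum_const, Set.ncard_eq_toFinset_card s hs]

theorem udp_const_iff [Finite Ω] {c : ℝ} (hc : c ≠ 0) :
    UDP (fun _ : Ω => c) ↔ ∀ I J : Set Ω, IsLowerSet I → IsLowerSet J → I.ncard = J.ncard →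
      ∃ f : Ω ≃o Ω, f '' I = J := by
  simp only [UDP, isIdl_iff_isLowerSet, finsum_mem_const (Set.toFinite _), nsmul_eq_mul,
    mul_left_inj' hc, Nat.cast_inj, implies_true, and_true, eq_comm (b := (_ '' _ : Set Ω))]

end UniqueDecomposition

namespace Hierarchical

variable {Ω : Type*} [PartialOrder Ω]

theorem lt_iff_lenP_lt [Finite Ω] (h : Hierarchical Ω) {x y : Ω} : x < y ↔ lenP x < lenP y :=
  ⟨fun hxy => lenP_strictMono hxy, fun hxy => (h x y hxy).lt_of_ne fun heq => hxy.ne (heq ▸ rfl)⟩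

theorem exists_orderIso_eq_swap [Finite Ω] [DecidableEq Ω] (h : Hierarchical Ω) {x y : Ω}
    (hxy : lenP x = lenP y) : ∃ f : Ω ≃o Ω, ⇑f = Equiv.swap x y :=
  have hlen := Equiv.apply_swap_eq_self hxy
  ⟨⟨Equiv.swap x y, by simp [le_iff_eq_or_lt, h.lt_iff_lenP_lt, hlen]⟩, rfl⟩

theorem lenP_eq_of_mem_sdiff (h : Hierarchical Ω) {I J : Set Ω} (hI : IsLowerSet I)
    (hJ : IsLowerSet J) {x y : Ω} (hx : x ∈ I \ J) (hy : y ∈ J \ I) : lenP x = lenP y :=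
  le_antisymm (not_lt.1 fun hlt => hy.2 (hI (h y x hlt) hx.1))
    (not_lt.1 fun hlt => hx.2 (hJ (h x y hlt) hy.1))

theorem exists_orderIso_image_eq [Finite Ω] (h : Hierarchical Ω) {I J : Set Ω} (hI : IsLowerSet I)
    (hJ : IsLowerSet J) (hcard : I.ncard = J.ncard) : ∃ f : Ω ≃o Ω, f '' I = J := by
  classical
  induction hn : (I \ J).ncard using Nat.strong_induction_on generalizing I with
  | _ n ih =>
    by_cases hIJ : I ⊆ J
    · exact ⟨OrderIso.refl Ω, by simpa using Set.eq_of_subset_of_ncard_le hIJ hcard.ge⟩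
    obtain ⟨x, hx⟩ : (I \ J).Nonempty := Set.sdiff_nonempty.2 hIJ
    obtain ⟨y, hy⟩ : (J \ I).Nonempty :=
      Set.sdiff_nonempty.2 fun hJI => hIJ (Set.eq_of_subset_of_ncard_le hJI hcard.le).ge
    obtain ⟨s, hs⟩ := h.exists_orderIso_eq_swap (h.lenP_eq_of_mem_sdiff hI hJ hx hy)
    have hdiff : s '' I \ J = (I \ J) \ {x} := by
      rw [hs, Equiv.image_swap_of_mem_of_notMem hx.1 hy.2, sdiff_sdiff_comm,
        Set.insert_sdiff_of_mem _ hy.1, sdiff_sdiff_comm]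
    have hcard' : (s '' I).ncard = J.ncard :=
      (Set.ncard_image_of_injective I s.injective).trans hcard
    have hlt : (s '' I \ J).ncard < n := hn ▸ hdiff ▸ Set.ncard_sdiff_singleton_lt_of_mem hx
    obtain ⟨f, hf⟩ := ih _ hlt (hI.image s) hcard' rfl
    exact ⟨s.trans f, by rw [← hf, Set.image_image]; rfl⟩

end Hierarchical

section Converse

variable {Ω : Type*} [PartialOrder Ω] [Finite Ω]

theorem exists_isLowerSet_insert_sdiff_of_not_hierarchical (h : ¬ Hierarchical Ω) :
    ∃ u v : Ω, lenP u < lenP v ∧ IsLowerSet (insert v ({x | lenP x ≤ lenP u} \ {u})) := by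
  simp only [Hierarchical, Nat.succ_le_iff, not_forall, exists_prop] at h
  obtain ⟨u, h⟩ := h
  obtain ⟨v, ⟨huv, hnle⟩, hmin⟩ :=
    (Set.toFinite {v : Ω | lenP u < lenP v ∧ ¬ u ≤ v}).exists_minimal h
  have hlower : IsLowerSet ({x | lenP x ≤ lenP u} \ {u}) :=
    (isLowerSet_setOf_lenP_le (lenP u)).erase fun x hx hux =>
      (hux.eq_or_lt.resolve_right fun hlt => (lenP_strictMono hlt).not_ge hx).symm
  refine ⟨u, v, huv, ?_⟩
  rintro x y hyx (rfl | hx)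
  · rcases hyx.eq_or_lt with rfl | hlt
    · exact Or.inl rfl
    · have hny : ¬ u ≤ y := fun huy => hnle (huy.trans hyx)
      have hlen : lenP y ≤ lenP u := not_lt.1 fun hlen => hlt.not_ge (hmin ⟨hlen, hny⟩ hyx)
      exact Or.inr ⟨hlen, fun hyu => hny hyu.ge⟩
  · exact Or.inr (hlower hyx hx)

theorem hierarchical_of_exists_orderIso_image_eq
    (h : ∀ I J : Set Ω, IsLowerSet I → IsLowerSet J → I.ncard = J.ncard →
      ∃ f : Ω ≃o Ω, f '' I = J) : Hierarchical Ω := by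
  by_contra hΩ
  obtain ⟨u, v, huv, hlower⟩ := exists_isLowerSet_insert_sdiff_of_not_hierarchical hΩ
  set S : Set Ω := {x | lenP x ≤ lenP u}
  have hu : u ∈ S := le_refl (lenP u)
  have hv : v ∉ S := huv.not_ge
  have hcard : (insert v (S \ {u})).ncard = S.ncard := Set.ncard_exchange hv hu
  obtain ⟨f, hf⟩ := h _ S hlower (isLowerSet_setOf_lenP_le (lenP u)) hcard
  have hfv : f v ∈ S := hf ▸ Set.mem_image_of_mem f (Set.mem_insert v _)
  exact hv ((lenP_map_orderIso f v).ge.trans hfv)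

end Converse

theorem stmt0_general {Ω : Type*} [Finite Ω] [PartialOrder Ω] {c : ℝ} (hc : c ≠ 0) :
    UDP (fun _ : Ω => c) ↔ Hierarchical Ω :=
  (udp_const_iff hc).trans
    ⟨hierarchical_of_exists_orderIso_image_eq, fun h _ _ => h.exists_orderIso_image_eq⟩

theorem stmt0 (Ω : Type*) [Fintype Ω] [Nonempty Ω] [PartialOrder Ω] :
    UDP (fun _ : Ω => (1 : ℝ)) ↔ Hierarchical Ω :=
  stmt0_general one_ne_zero
end

section
/- Let φ ∈ End_S(H) satisfy ϖ(supp(φ(α))) = ϖ(supp(α)) for all α ∈ H, and let θ ∈ H be such that there exists v ∈ Ω with ⟨supp(φ(θ))⟩_P = ⟨{v}⟩_P. Then there exists u ∈ supp(θ) with ⟨supp(θ)⟩_P = ⟨{u}⟩_P, and moreover for every γ ∈ H one has ⟨supp(γ)⟩_P ⊆ ⟨supp(θ)⟩_P if and only if ⟨supp(φ(γ))⟩_P ⊆ ⟨supp(φ(θ))⟩_P. -/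
/-- The support of an element of `∏ i, H i`. -/
def hsupp {Ω : Type*} {H : Ω → Type*} [∀ i, Zero (H i)] (β : ∀ i, H i) : Set Ω :=
  {i | β i ≠ 0}

/-!
Cutting `θ` into its coordinates, one of them, at `u ∈ supp θ` say, has an image whose support
contains `v`. Monotonicity in both directions then forces `ϖ {u} = ϖ {v}`, hence `⟨supp θ⟩ = ⟨u⟩`.

For the equivalence, let `γ` be supported in `⟨u⟩`. Since by (3.3) an ideal containing `v` whose
weight is `ϖ {v}` must be `⟨v⟩`, either `φ γ` vanishes at `v` or `φ γ` is supported in `⟨v⟩`. Both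
alternatives define subgroups, and a subgroup covered by two subgroups lies in one of them; `θ`
rules out the first. The converse is the same argument with the roles of `id` and `φ` exchanged.
-/

section Ideal

variable {Ω : Type*} [PartialOrder Ω]

theorem isIdl_idl (B : Set Ω) : IsIdl (idl B) :=
  fun _ _ hab ⟨c, hc, hbc⟩ => ⟨c, hc, hab.trans hbc⟩

theorem subset_idl (B : Set Ω) : B ⊆ idl B :=
  subset_lowerClosure

theorem idl_subset_idl_iff {A B : Set Ω} : idl A ⊆ idl B ↔ A ⊆ idl B :=
  lowerClosure_le (t := lowerClosure B)

theorem mem_of_idl_eq_idl_singleton {A : Set Ω} {w : Ω} (h : idl A = idl {w}) : w ∈ A := by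
  obtain ⟨a, ha, hwa⟩ : w ∈ idl A := h ▸ subset_idl {w} rfl
  obtain ⟨_, rfl, haw⟩ : a ∈ idl {w} := h ▸ subset_idl A ha
  exact hwa.antisymm haw ▸ ha

end Ideal

/-- A weight function `ϖ` on the subsets of a poset, compared by means of `r`, that satisfies the
conditions (3.1), (3.2) and (3.3), in this order. -/
structure IsIdealWeight {Ω Y : Type*} [PartialOrder Ω] (r : Y → Y → Prop) (ϖ : Set Ω → Y) :
    Prop where
  apply_idl : ∀ B : Set Ω, ϖ B = ϖ (idl B)
  mono : ∀ I J : Set Ω, IsIdl I → IsIdl J → I ⊆ J → r (ϖ I) (ϖ J)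
  eq_idl_singleton : ∀ I : Set Ω, IsIdl I → ∀ u ∈ I, ϖ I = ϖ {u} → I = idl {u}

namespace IsIdealWeight

variable {Ω Ω' Y : Type*} [PartialOrder Ω] [PartialOrder Ω'] {r : Y → Y → Prop}
  {ϖ : Set Ω → Y} {ϖ' : Set Ω' → Y}

theorem rel_of_subset_idl (hϖ : IsIdealWeight r ϖ) {A B : Set Ω} (h : A ⊆ idl B) :
    r (ϖ A) (ϖ B) := by
  rw [hϖ.apply_idl A, hϖ.apply_idl B]
  exact hϖ.mono _ _ (isIdl_idl A) (isIdl_idl B) (idl_subset_idl_iff.2 h)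

theorem rel_singleton_of_mem (hϖ : IsIdealWeight r ϖ) {A : Set Ω} {u : Ω} (hu : u ∈ A) :
    r (ϖ {u}) (ϖ A) :=
  hϖ.rel_of_subset_idl (Set.singleton_subset_iff.2 (subset_idl A hu))

theorem idl_eq_idl_singleton (hϖ : IsIdealWeight r ϖ) {A : Set Ω} {u : Ω} (hu : u ∈ A)
    (h : ϖ A = ϖ {u}) : idl A = idl {u} :=
  hϖ.eq_idl_singleton _ (isIdl_idl A) u (subset_idl A hu) (hϖ.apply_idl A ▸ h)

theorem subset_idl_singleton_of_eq [Std.Antisymm r] (hϖ : IsIdealWeight r ϖ)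
    (hϖ' : IsIdealWeight r ϖ') {A : Set Ω} {B : Set Ω'} {u : Ω} {v : Ω'} (hAB : ϖ A = ϖ' B)
    (huv : ϖ {u} = ϖ' {v}) (hA : A ⊆ idl {u}) (hv : v ∈ B) : B ⊆ idl {v} := by
  have hle : r (ϖ' B) (ϖ' {v}) := by
    rw [← hAB, ← huv]
    exact hϖ.rel_of_subset_idl hA
  have hB : ϖ' B = ϖ' {v} := antisymm hle (hϖ'.rel_singleton_of_mem hv)
  exact idl_subset_idl_iff.1 (hϖ'.idl_eq_idl_singleton hv hB).subset

end IsIdealWeight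

section Support

variable {Ω : Type*} {H : Ω → Type*}

theorem hsupp_single [∀ i, Zero (H i)] [DecidableEq Ω] {u : Ω} {x : H u} (hx : x ≠ 0) :
    hsupp (Pi.single u x : ∀ i, H i) = {u} := by
  ext i
  refine ⟨fun hi => ?_, ?_⟩
  · by_contra hne
    exact hi (Pi.single_eq_of_ne hne x)
  · rintro rfl
    simpa only [hsupp, Set.mem_ofPred_eq, Pi.single_eq_same] using hx

theorem sum_single_of_finite_hsupp [∀ i, AddCommMonoid (H i)] [DecidableEq Ω] {θ : ∀ i, H i}
    (hθ : (hsupp θ).Finite) : ∑ i ∈ hθ.toFinset, Pi.single i (θ i) = θ := by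
  ext j
  rw [Finset.sum_apply, Finset.sum_pi_single, ite_eq_left_iff, hθ.mem_toFinset]
  exact fun hj => (not_not.1 hj).symm

theorem exists_mem_hsupp_map_single [∀ i, AddCommMonoid (H i)] [DecidableEq Ω] {Ω' : Type*}
    {K : Ω' → Type*} [∀ j, AddCommMonoid (K j)] (φ : (∀ i, H i) →+ (∀ j, K j)) {θ : ∀ i, H i}
    (hθ : (hsupp θ).Finite) {v : Ω'} (hv : v ∈ hsupp (φ θ)) :
    ∃ u ∈ hsupp θ, v ∈ hsupp (φ (Pi.single u (θ u))) := by
  have hsum : φ θ v = ∑ i ∈ hθ.toFinset, φ (Pi.single i (θ i)) v := by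
    rw [← Finset.sum_apply, ← map_sum, sum_single_of_finite_hsupp hθ]
  obtain ⟨u, hu, huv⟩ := Finset.exists_ne_zero_of_sum_ne_zero (hsum.symm.trans_ne hv)
  exact ⟨u, hθ.mem_toFinset.1 hu, huv⟩

/-- The subgroup of the elements of `∏ i, H i` whose support is contained in `I`, expressed as the
product of zero subgroups over the complement of `I`. -/
def supportedIn (H : Ω → Type*) [∀ i, AddGroup (H i)] (I : Set Ω) : AddSubgroup (∀ i, H i) :=
  AddSubgroup.pi Iᶜ fun _ => ⊥

theorem mem_supportedIn [∀ i, AddGroup (H i)] {I : Set Ω} {β : ∀ i, H i} :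
    β ∈ supportedIn H I ↔ hsupp β ⊆ I :=
  forall_congr' fun _ => not_imp_comm

end Support

section WeightPreserving

variable {Ω Ω' Y : Type*} [PartialOrder Ω] [PartialOrder Ω'] {H : Ω → Type*} {K : Ω' → Type*}
  {r : Y → Y → Prop} [Std.Antisymm r] {ϖ : Set Ω → Y} {ϖ' : Set Ω' → Y}

theorem exists_mem_hsupp_weight_singleton_eq [∀ i, AddCommMonoid (H i)]
    [∀ j, AddCommMonoid (K j)] (hϖ : IsIdealWeight r ϖ) (hϖ' : IsIdealWeight r ϖ')
    (φ : (∀ i, H i) →+ (∀ j, K j)) (hφ : ∀ α, ϖ' (hsupp (φ α)) = ϖ (hsupp α)) {θ : ∀ i, H i}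
    (hθ : (hsupp θ).Finite) {v : Ω'} (hv : v ∈ hsupp (φ θ)) (hθv : ϖ (hsupp θ) = ϖ' {v}) :
    ∃ u ∈ hsupp θ, ϖ {u} = ϖ' {v} := by
  classical
  obtain ⟨u, hu, huv⟩ := exists_mem_hsupp_map_single φ hθ hv
  refine ⟨u, hu, antisymm (hθv ▸ hϖ.rel_singleton_of_mem hu) ?_⟩
  rw [← hsupp_single hu, ← hφ]
  exact hϖ'.rel_singleton_of_mem huv

-- Stated for a pair of homomorphisms so that `(id, φ)` and `(φ, id)` give the two implications.
theorem hsupp_subset_idl_singleton_of_weight_eq [∀ i, AddGroup (H i)] [∀ j, AddGroup (K j)]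
    {G : Type*} [AddGroup G] (hϖ : IsIdealWeight r ϖ) (hϖ' : IsIdealWeight r ϖ')
    (f : G →+ (∀ i, H i)) (g : G →+ (∀ j, K j))
    (hfg : ∀ δ, ϖ (hsupp (f δ)) = ϖ' (hsupp (g δ))) {u : Ω} {v : Ω'} (huv : ϖ {u} = ϖ' {v})
    {θ γ : G} (hθ : hsupp (f θ) ⊆ idl {u}) (hv : v ∈ hsupp (g θ))
    (hγ : hsupp (f γ) ⊆ idl {u}) : hsupp (g γ) ⊆ idl {v} := by
  have hcover : ((supportedIn H (idl {u})).comap f : Set G) ⊆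
      (supportedIn K {v}ᶜ).comap g ∪ (supportedIn K (idl {v})).comap g := by
    intro δ hδ
    by_cases hvδ : v ∈ hsupp (g δ)
    · exact .inr <| mem_supportedIn.2 <|
        hϖ.subset_idl_singleton_of_eq hϖ' (hfg δ) huv (mem_supportedIn.1 hδ) hvδ
    · exact .inl <| mem_supportedIn.2 <| Set.subset_compl_singleton_iff.2 hvδ
  rcases AddSubgroupClass.subset_union.1 hcover with hvanish | hsupported
  · have hθv : hsupp (g θ) ⊆ {v}ᶜ := mem_supportedIn.1 (hvanish (mem_supportedIn.2 hθ))
    exact absurd rfl (hθv hv)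
  · exact mem_supportedIn.1 (hsupported (mem_supportedIn.2 hγ))

theorem stmt1_general [∀ i, AddCommGroup (H i)] [∀ j, AddCommGroup (K j)]
    (hϖ : IsIdealWeight r ϖ) (hϖ' : IsIdealWeight r ϖ') (φ : (∀ i, H i) →+ (∀ j, K j))
    (hφ : ∀ α, ϖ' (hsupp (φ α)) = ϖ (hsupp α)) {θ : ∀ i, H i} (hfin : (hsupp θ).Finite) {v : Ω'}
    (hv : idl (hsupp (φ θ)) = idl {v}) :
    (∃ u ∈ hsupp θ, idl (hsupp θ) = idl {u}) ∧
      ∀ γ, idl (hsupp γ) ⊆ idl (hsupp θ) ↔ idl (hsupp (φ γ)) ⊆ idl (hsupp (φ θ)) := by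
  have hvθ : v ∈ hsupp (φ θ) := mem_of_idl_eq_idl_singleton hv
  have hθv : ϖ (hsupp θ) = ϖ' {v} := by rw [← hφ, hϖ'.apply_idl, hv, ← hϖ'.apply_idl]
  obtain ⟨u, hu, huv⟩ := exists_mem_hsupp_weight_singleton_eq hϖ hϖ' φ hφ hfin hvθ hθv
  have hθu : idl (hsupp θ) = idl {u} := hϖ.idl_eq_idl_singleton hu (hθv.trans huv.symm)
  refine ⟨⟨u, hu, hθu⟩, fun γ => ?_⟩
  rw [hθu, hv, idl_subset_idl_iff, idl_subset_idl_iff]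
  constructor
  · exact hsupp_subset_idl_singleton_of_weight_eq hϖ hϖ' (.id _) φ (fun δ => (hφ δ).symm) huv
      (idl_subset_idl_iff.1 hθu.subset) hvθ
  · exact hsupp_subset_idl_singleton_of_weight_eq hϖ' hϖ φ (.id _) hφ huv.symm
      (idl_subset_idl_iff.1 hv.subset) hu

end WeightPreserving

theorem stmt1 {Ω : Type*} [Fintype Ω] [Nonempty Ω] [PartialOrder Ω]
    {S : Type*} [Ring S] {H : Ω → Type*} [∀ i, AddCommGroup (H i)] [∀ i, Module S (H i)]
    {Y : Type*} (r : Y → Y → Prop) (hr : ∀ a b : Y, r a b → r b a → a = b)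
    (ϖ : Set Ω → Y)
    (h31 : ∀ B : Set Ω, ϖ B = ϖ (idl B))
    (h32 : ∀ I J : Set Ω, IsIdl I → IsIdl J → I ⊆ J → r (ϖ I) (ϖ J))
    (h33 : ∀ I : Set Ω, IsIdl I → ∀ u ∈ I, ϖ I = ϖ {u} → I = idl {u})
    (φ : (∀ i, H i) →ₗ[S] (∀ i, H i))
    (hφ : ∀ α : ∀ i, H i, ϖ (hsupp (φ α)) = ϖ (hsupp α))
    (θ : ∀ i, H i) (v : Ω) (hv : idl (hsupp (φ θ)) = idl ({v} : Set Ω)) :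
    (∃ u ∈ hsupp θ, idl (hsupp θ) = idl ({u} : Set Ω)) ∧
      ∀ γ : ∀ i, H i,
        idl (hsupp γ) ⊆ idl (hsupp θ) ↔ idl (hsupp (φ γ)) ⊆ idl (hsupp (φ θ)) := by
  have : Std.Antisymm r := ⟨hr⟩
  have hϖ : IsIdealWeight r ϖ := ⟨h31, h32, h33⟩
  exact stmt1_general hϖ hϖ φ.toAddMonoidHom hφ (Set.toFinite _) hv
end

section
/- Suppose that for every S-submodule C ⊆ H and every S-linear map χ : C → H preserving P-support there exists φ ∈ End_S(H) with φ restricted to C equal to χ. Then (H, P) satisfies Condition (B). Furthermore, if H satisfies the MacWilliams extension property for P-support, then H satisfies Condition (A). -/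
/-- Condition (A): every `H i` is strong pseudo-injective. -/
def CondA (S : Type*) [Ring S] {Ω : Type*} (H : Ω → Type*)
    [∀ i, AddCommGroup (H i)] [∀ i, Module S (H i)] : Prop :=
  ∀ i : Ω, ∀ B : Submodule S (H i), ∀ h : B →ₗ[S] H i, Function.Injective h →
    ∃ τ : H i ≃ₗ[S] H i, ∀ b : B, τ b = h b

/-- Condition (B): `H k` is `H l`-injective whenever `k ≼ l`, `k ≠ l`. -/
def CondB (S : Type*) [Ring S] {Ω : Type*} [PartialOrder Ω] (H : Ω → Type*)
    [∀ i, AddCommGroup (H i)] [∀ i, Module S (H i)] : Prop :=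
  ∀ k l : Ω, k ≤ l → k ≠ l →
    ∀ A : Submodule S (H l), ∀ f : A →ₗ[S] H k, ∃ g : H l →ₗ[S] H k, ∀ a : A, g a = f a

/-- The MacWilliams extension property for `P`-support. -/
def MEPsupp (S : Type*) [Ring S] {Ω : Type*} [PartialOrder Ω] (H : Ω → Type*)
    [∀ i, AddCommGroup (H i)] [∀ i, Module S (H i)] : Prop :=
  ∀ C : Submodule S (∀ i, H i), ∀ f : C →ₗ[S] (∀ i, H i),
    (∀ x : C, idl (hsupp (f x)) = idl (hsupp (x : ∀ i, H i))) →
    ∃ φ : (∀ i, H i) ≃ₗ[S] (∀ i, H i),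
      (∀ α : ∀ i, H i, idl (hsupp (φ α)) = idl (hsupp α)) ∧ ∀ x : C, φ (x : ∀ i, H i) = f x

/-!
Both conditions are read off the blocks `H l → H k` of endomorphisms of `H`, tested on codes
concentrated in a single coordinate `l`.

For Condition (B) with `k ≺ l`, a map `f : A → H k` with `A ⊆ H l` is recorded by the map
`a e_l ↦ a e_l + f(a) e_k`: the new entry lies below `l`, so the `P`-support does not change, and
the `(k, l)` block of an extension extends `f`.

For Condition (A), an endomorphism that does not enlarge `P`-supports is block triangular, so
passing to the `l`-th diagonal block is multiplicative. Hence the diagonal blocks of a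
`P`-support-preserving automorphism `φ` are invertible, with inverses the diagonal blocks of `φ⁻¹`.
-/

section PSupport

variable {Ω : Type*} [PartialOrder Ω]

theorem idl_eq_Iic_of_isGreatest {B : Set Ω} {l : Ω} (h : IsGreatest B l) :
    idl B = Set.Iic l :=
  Set.Subset.antisymm (fun _ ⟨_, hb, hab⟩ => hab.trans (h.2 hb)) fun _ ha => ⟨l, h.1, ha⟩

variable [DecidableEq Ω] {H : Ω → Type*}

theorem idl_hsupp_single [∀ i, Zero (H i)] {l : Ω} {x : H l} (hx : x ≠ 0) :
    idl (hsupp (Pi.single l x)) = Set.Iic l := by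
  refine idl_eq_Iic_of_isGreatest ⟨by simpa [hsupp] using hx, fun i hi => ?_⟩
  by_contra hil
  exact hi (Pi.single_eq_of_ne (ne_of_not_le hil) x)

theorem idl_hsupp_single_subset_Iic [∀ i, Zero (H i)] (l : Ω) (x : H l) :
    idl (hsupp (Pi.single l x)) ⊆ Set.Iic l := by
  rcases eq_or_ne x 0 with rfl | hx
  · simp [idl, hsupp]
  · exact (idl_hsupp_single hx).subset

theorem idl_hsupp_single_add_single [∀ i, AddZeroClass (H i)] {k l : Ω} (hkl : k < l)
    {x : H l} (hx : x ≠ 0) (y : H k) :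
    idl (hsupp (Pi.single l x + Pi.single k y)) = Set.Iic l := by
  refine idl_eq_Iic_of_isGreatest ⟨by simpa [hsupp, hkl.ne'] using hx, fun i hi => ?_⟩
  by_contra hil
  have hik : i ≠ k := fun h => hil (h.trans_le hkl.le)
  exact hi (by simp [ne_of_not_le hil, hik])

end PSupport

section Blocks

variable {Ω S : Type*} [DecidableEq Ω] [Semiring S] {H : Ω → Type*}
  [∀ i, AddCommMonoid (H i)] [∀ i, Module S (H i)]

/-- The block `H l → H k` of an endomorphism of `∏ i, H i`, that is, its `(k, l)` matrix entry. -/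
def block (φ : (∀ i, H i) →ₗ[S] ∀ i, H i) (k l : Ω) : H l →ₗ[S] H k :=
  LinearMap.proj k ∘ₗ φ ∘ₗ LinearMap.single S H l

@[simp]
theorem block_apply (φ : (∀ i, H i) →ₗ[S] ∀ i, H i) (k l : Ω) (x : H l) :
    block φ k l x = φ (Pi.single l x) k :=
  rfl

theorem block_id_self (l : Ω) :
    block (LinearMap.id : (∀ i, H i) →ₗ[S] ∀ i, H i) l l = LinearMap.id := by
  ext x
  simp

variable [PartialOrder Ω]

theorem apply_eq_block_self_of_forall_lt {φ : (∀ i, H i) →ₗ[S] ∀ i, H i}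
    (hφ : ∀ α, idl (hsupp (φ α)) ⊆ idl (hsupp α)) {l : Ω} {α : ∀ i, H i}
    (hα : ∀ i, l < i → α i = 0) : φ α l = block φ l l (α l) := by
  have decomposition : Function.update α l 0 + Pi.single l (α l) = α := by
    ext i
    rcases eq_or_ne i l with rfl | hi
    · simp
    · simp [hi]
  have notMem_idl : l ∉ idl (hsupp (Function.update α l 0)) := by
    rintro ⟨b, hb, hlb⟩
    rcases hlb.eq_or_lt with rfl | hlb
    · exact hb (Function.update_self ..)
    · exact hb ((Function.update_of_ne hlb.ne' ..).trans (hα b hlb))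
  have rest_eq_zero : φ (Function.update α l 0) l = 0 := by
    by_contra h
    exact notMem_idl (hφ _ ⟨l, h, le_rfl⟩)
  calc φ α l = φ (Function.update α l 0 + Pi.single l (α l)) l := by rw [decomposition]
    _ = block φ l l (α l) := by rw [map_add, Pi.add_apply, rest_eq_zero, zero_add, block_apply]

theorem block_comp_self {φ ψ : (∀ i, H i) →ₗ[S] ∀ i, H i}
    (hφ : ∀ α, idl (hsupp (φ α)) ⊆ idl (hsupp α)) (hψ : ∀ α, idl (hsupp (ψ α)) ⊆ idl (hsupp α))
    (l : Ω) : block (φ ∘ₗ ψ) l l = block φ l l ∘ₗ block ψ l l := by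
  ext x
  refine apply_eq_block_self_of_forall_lt hφ fun i hli => ?_
  by_contra hi
  exact hli.not_ge (idl_hsupp_single_subset_Iic l x (hψ _ ⟨i, hi, le_rfl⟩))

/-- The diagonal block of a `P`-support-preserving automorphism, as an automorphism of `H l`. -/
def blockEquiv (φ : (∀ i, H i) ≃ₗ[S] ∀ i, H i) (hφ : ∀ α, idl (hsupp (φ α)) = idl (hsupp α))
    (l : Ω) : H l ≃ₗ[S] H l :=
  have hφ_symm (α : ∀ i, H i) : idl (hsupp (φ.symm α)) = idl (hsupp α) := by
    rw [← hφ, φ.apply_symm_apply]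
  LinearEquiv.ofLinearMap (block φ.toLinearMap l l) (block φ.symm.toLinearMap l l)
    (by rw [← block_comp_self (fun α => (hφ α).subset) (fun α => (hφ_symm α).subset),
      φ.comp_symm, block_id_self])
    (by rw [← block_comp_self (fun α => (hφ_symm α).subset) (fun α => (hφ α).subset),
      φ.symm_comp, block_id_self])

@[simp]
theorem blockEquiv_apply (φ : (∀ i, H i) ≃ₗ[S] ∀ i, H i)
    (hφ : ∀ α, idl (hsupp (φ α)) = idl (hsupp α)) (l : Ω) (x : H l) :
    blockEquiv φ hφ l x = φ (Pi.single l x) l :=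
  rfl

end Blocks

section Extension

variable {Ω S : Type*} [PartialOrder Ω] {H : Ω → Type*}

theorem exists_range_linearMap_of_idl_hsupp_eq [Semiring S] [∀ i, AddCommMonoid (H i)]
    [∀ i, Module S (H i)] {M : Type*} [AddCommMonoid M] [Module S M]
    {ι F : M →ₗ[S] ∀ i, H i} (hι : Function.Injective ι)
    (hF : ∀ m, idl (hsupp (F m)) = idl (hsupp (ι m))) :
    ∃ χ : LinearMap.range ι →ₗ[S] ∀ i, H i,
      (∀ x, idl (hsupp (χ x)) = idl (hsupp (x : ∀ i, H i))) ∧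
        ∀ m, χ (ι.rangeRestrict m) = F m := by
  have χ_apply (m : M) : F ((LinearEquiv.ofInjective ι hι).symm (ι.rangeRestrict m)) = F m :=
    congrArg F ((LinearEquiv.ofInjective ι hι).symm_apply_apply m)
  refine ⟨F ∘ₗ (LinearEquiv.ofInjective ι hι).symm.toLinearMap, ?_, χ_apply⟩
  rintro ⟨_, m, rfl⟩
  exact (congrArg (fun β => idl (hsupp β)) (χ_apply m)).trans (hF m)

variable (S H) [Ring S] [∀ i, AddCommGroup (H i)] [∀ i, Module S (H i)]

/-- The weakening of `MEPsupp` in which the extension of a `P`-support-preserving map is only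
required to be an endomorphism. -/
def EndExtensionProperty : Prop :=
  ∀ C : Submodule S (∀ i, H i), ∀ χ : C →ₗ[S] (∀ i, H i),
    (∀ x : C, idl (hsupp (χ x)) = idl (hsupp (x : ∀ i, H i))) →
    ∃ φ : (∀ i, H i) →ₗ[S] (∀ i, H i), ∀ x : C, φ (x : ∀ i, H i) = χ x

variable {S H}

theorem EndExtensionProperty.condB (hext : EndExtensionProperty S H) : CondB S H := by
  classical
  intro k l hkl hne A f
  let ι : A →ₗ[S] ∀ i, H i := LinearMap.single S H l ∘ₗ A.subtype
  have hι : Function.Injective ι := (Pi.single_injective l).comp A.injective_subtype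
  have same_support (a : A) :
      idl (hsupp ((ι + LinearMap.single S H k ∘ₗ f) a)) = idl (hsupp (ι a)) := by
    rcases eq_or_ne a 0 with rfl | ha
    · simp only [map_zero]
    · have ha' : (a : H l) ≠ 0 := by simpa using ha
      exact (idl_hsupp_single_add_single (hkl.lt_of_ne hne) ha' (f a)).trans
        (idl_hsupp_single ha').symm
  obtain ⟨χ, hχ, χ_apply⟩ := exists_range_linearMap_of_idl_hsupp_eq hι same_support
  obtain ⟨φ, hφ⟩ := hext _ χ hχ
  refine ⟨block φ k l, fun a => ?_⟩
  calc block φ k l a = φ (ι a) k := block_apply φ k l a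
    _ = (ι a + Pi.single k (f a)) k :=
        congrFun ((hφ (ι.rangeRestrict a)).trans (χ_apply a)) k
    _ = f a := by simp [ι, hne]

theorem MEPsupp.condA (hMEP : MEPsupp S H) : CondA S H := by
  classical
  intro l A h h_inj
  let ι : A →ₗ[S] ∀ i, H i := LinearMap.single S H l ∘ₗ A.subtype
  have hι : Function.Injective ι := (Pi.single_injective l).comp A.injective_subtype
  have same_support (a : A) :
      idl (hsupp ((LinearMap.single S H l ∘ₗ h) a)) = idl (hsupp (ι a)) := by
    rcases eq_or_ne a 0 with rfl | ha
    · simp only [map_zero]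
    · have ha' : (a : H l) ≠ 0 := by simpa using ha
      exact (idl_hsupp_single ((map_ne_zero_iff h h_inj).mpr ha)).trans (idl_hsupp_single ha').symm
  obtain ⟨χ, hχ, χ_apply⟩ := exists_range_linearMap_of_idl_hsupp_eq hι same_support
  obtain ⟨φ, hφ, φ_apply⟩ := hMEP _ χ hχ
  refine ⟨blockEquiv φ hφ l, fun a => ?_⟩
  calc blockEquiv φ hφ l a = φ (ι a) l := blockEquiv_apply φ hφ l a
    _ = (Pi.single l (h a) : ∀ i, H i) l :=
        congrFun ((φ_apply (ι.rangeRestrict a)).trans (χ_apply a)) l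
    _ = h a := Pi.single_eq_same l (h a)

end Extension

theorem stmt5_general {Ω : Type*} [PartialOrder Ω] {S : Type*} [Ring S] {H : Ω → Type*}
    [∀ i, AddCommGroup (H i)] [∀ i, Module S (H i)] :
    (EndExtensionProperty S H → CondB S H) ∧ (MEPsupp S H → CondA S H) :=
  ⟨EndExtensionProperty.condB, MEPsupp.condA⟩

theorem stmt5 {Ω : Type*} [Fintype Ω] [Nonempty Ω] [PartialOrder Ω]
    {S : Type*} [Ring S] {H : Ω → Type*} [∀ i, AddCommGroup (H i)] [∀ i, Module S (H i)]
    (hext : ∀ C : Submodule S (∀ i, H i), ∀ χ : C →ₗ[S] (∀ i, H i),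
      (∀ x : C, idl (hsupp (χ x)) = idl (hsupp (x : ∀ i, H i))) →
      ∃ φ : (∀ i, H i) →ₗ[S] (∀ i, H i), ∀ x : C, φ (x : ∀ i, H i) = χ x) :
    CondB S H ∧ (MEPsupp S H → CondA S H) :=
  ⟨stmt5_general.1 hext, stmt5_general.2⟩
end

section
/- The following three statements are equivalent: (1) for every linear code C ⊆ H and every S-linear map χ : C → H with supp(χ(α)) ⊆ ⟨supp(α)⟩_P for all α ∈ C, there exists φ ∈ R with φ restricted to C equal to χ; (2) for every linear code C ⊆ H and every S-linear map χ : C → H with supp(χ(α)) ⊆ ⟨supp(α)⟩_P for all α ∈ C, there exists φ ∈ End_S(H) with φ restricted to C equal to χ; (3) for all k, l ∈ Ω with k ≼ l, H_k is H_l-injective. -/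
/-!
Composing with the coordinate projections reduces the extension of `χ : C → H` to that of each
`χ_k : C → H k`. Support preservation says exactly that `χ_k` vanishes on the words that are zero at
every `l ≥ k`, so `χ_k` factors through the image of `C` in `∏_{l ≥ k} H l`. Relative injectivity
passes to finite products, so if `H k` is `H l`-injective for all `l ≥ k`, then `χ_k` extends to a
map on `∏_{l ≥ k} H l`; composing it with the restriction from `H` gives an extension that again
preserves supports.

Conversely, a map `A → H k` with `A ≤ H l` and `k ≤ l` is a support-preserving map on the code of
words supported at `l` with entry in `A`, and an extension of it to `H` restricts to one to `H l`.
-/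

section RelInjective

variable {S X X₁ X₂ Y : Type*} [Ring S]
  [AddCommGroup X] [Module S X] [AddCommGroup X₁] [Module S X₁]
  [AddCommGroup X₂] [Module S X₂] [AddCommGroup Y] [Module S Y]

variable (S X Y) in
/-- Relative injectivity: the module `Y` is `X`-injective, the condition imposed on pairs of
coordinate modules. In `RelInjective S X Y` the module being injective comes last, and `g` extending
`f` is expressed pointwise. -/
def RelInjective : Prop :=
  ∀ A : Submodule S X, ∀ f : A →ₗ[S] Y, ∃ g : X →ₗ[S] Y, ∀ a : A, g a = f a

namespace RelInjective

open LinearMap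

theorem exists_comp_eq_of_ker_le {M : Type*} [AddCommGroup M] [Module S M]
    (hY : RelInjective S X Y) (p : M →ₗ[S] X) (f : M →ₗ[S] Y) (hpf : ker p ≤ ker f) :
    ∃ g : X →ₗ[S] Y, g ∘ₗ p = f := by
  obtain ⟨g, hg⟩ := hY (range p) ((ker p).liftQ f hpf ∘ₗ p.quotKerEquivRange.symm)
  refine ⟨g, LinearMap.ext fun x => ?_⟩
  simpa using hg ⟨p x, mem_range_self p x⟩

theorem of_injective (hY : RelInjective S X₂ Y) (i : X₁ →ₗ[S] X₂)
    (hi : Function.Injective i) : RelInjective S X₁ Y := by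
  intro A f
  have hker : ker (i ∘ₗ A.subtype) = ⊥ :=
    ker_eq_bot.2 (hi.comp A.subtype_injective)
  obtain ⟨g, hg⟩ := hY.exists_comp_eq_of_ker_le (i ∘ₗ A.subtype) f (hker.trans_le bot_le)
  exact ⟨g ∘ₗ i, LinearMap.congr_fun hg⟩

theorem of_subsingleton [Subsingleton X] : RelInjective S X Y :=
  fun _ f => ⟨0, fun a => by rw [Subsingleton.elim a 0, map_zero, LinearMap.zero_apply]⟩

theorem prod (h₁ : RelInjective S X₁ Y) (h₂ : RelInjective S X₂ Y) :
    RelInjective S (X₁ × X₂) Y := by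
  intro A f
  let p₁ : A →ₗ[S] X₁ := fst S X₁ X₂ ∘ₗ A.subtype
  let p₂ : A →ₗ[S] X₂ := snd S X₁ X₂ ∘ₗ A.subtype
  -- `p₂` is injective on `ker p₁`, so `f` factors through it there, say as `g₂ ∘ p₂`;
  -- then `f - g₂ ∘ p₂` vanishes on `ker p₁` and factors through `p₁`.
  have hker : ker (p₂ ∘ₗ (ker p₁).subtype) ≤ ker (f ∘ₗ (ker p₁).subtype) := by
    intro x hx
    have hx₁ : p₁ x = 0 := x.2
    have hx₂ : p₂ x = 0 := hx
    have hx₀ : (x : A) = 0 := Subtype.ext (Prod.ext hx₁ hx₂)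
    rw [mem_ker, comp_apply, Submodule.subtype_apply, hx₀, map_zero]
  obtain ⟨g₂, hg₂⟩ := h₂.exists_comp_eq_of_ker_le (M := ker p₁) _ _ hker
  have hker' : ker p₁ ≤ ker (f - g₂ ∘ₗ p₂) := by
    intro x hx
    have hx₂ : g₂ (p₂ x) = f x := LinearMap.congr_fun hg₂ ⟨x, hx⟩
    rw [mem_ker, LinearMap.sub_apply, comp_apply, hx₂, sub_self]
  obtain ⟨g₁, hg₁⟩ := h₁.exists_comp_eq_of_ker_le p₁ _ hker'
  refine ⟨g₁.coprod g₂, fun a => ?_⟩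
  have ha : g₁ (p₁ a) = f a - g₂ (p₂ a) := LinearMap.congr_fun hg₁ a
  exact eq_sub_iff_add_eq.1 ha

theorem pi {ι : Type*} [Finite ι] {M : ι → Type*} [∀ i, AddCommGroup (M i)]
    [∀ i, Module S (M i)] (hM : ∀ i, RelInjective S (M i) Y) : RelInjective S (∀ i, M i) Y :=
  Module.pi_induction' S (fun N _ _ => RelInjective S N Y) (fun N _ _ => RelInjective S N Y)
    (fun e h => h.of_injective e.symm.toLinearMap e.symm.injective)
    (fun e h => h.of_injective e.symm.toLinearMap e.symm.injective)
    of_subsingleton prod M hM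

theorem exists_extension_of_forall_mem_eq_zero {ι : Type*} {M : ι → Type*}
    [∀ i, AddCommGroup (M i)] [∀ i, Module S (M i)] {s : Set ι} (hs : s.Finite)
    (hY : ∀ i ∈ s, RelInjective S (M i) Y) (C : Submodule S (∀ i, M i)) (f : C →ₗ[S] Y)
    (hf : ∀ x : C, (∀ i ∈ s, (x : ∀ i, M i) i = 0) → f x = 0) :
    ∃ g : (∀ i, M i) →ₗ[S] Y,
      (∀ α, (∀ i ∈ s, α i = 0) → g α = 0) ∧ ∀ x : C, g x = f x := by
  have : Finite s := hs
  let r : (∀ i, M i) →ₗ[S] ∀ i : s, M i := LinearMap.pi fun i => proj (i : ι)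
  have hr (α : ∀ i, M i) : r α = 0 ↔ ∀ i ∈ s, α i = 0 := by
    simp [r, funext_iff]
  have hprod : RelInjective S (∀ i : s, M i) Y := pi fun i => hY i i.2
  obtain ⟨g, hg⟩ := hprod.exists_comp_eq_of_ker_le (r ∘ₗ C.subtype) f
    fun x hx => hf x ((hr x).1 hx)
  refine ⟨g ∘ₗ r, fun α hα => ?_, LinearMap.congr_fun hg⟩
  rw [comp_apply, (hr α).2 hα, map_zero]

end RelInjective

end RelInjective

section Support

variable {Ω : Type*} [PartialOrder Ω] {H : Ω → Type*}

theorem hsupp_subset_idl_hsupp_iff [∀ i, Zero (H i)] {α β : ∀ i, H i} :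
    hsupp β ⊆ idl (hsupp α) ↔ ∀ k, (∀ i ∈ Set.Ici k, α i = 0) → β k = 0 := by
  refine forall_congr' fun k => ?_
  rw [← not_imp_not]
  simp [hsupp, idl, imp_not_comm]

variable {S : Type*} [Ring S] [∀ i, AddCommGroup (H i)] [∀ i, Module S (H i)]

theorem exists_support_preserving_extension (hΩ : ∀ k : Ω, (Set.Ici k).Finite)
    (hH : ∀ k l : Ω, k ≤ l → RelInjective S (H l) (H k))
    (C : Submodule S (∀ i, H i)) (χ : C →ₗ[S] (∀ i, H i))
    (hχ : ∀ x : C, hsupp (χ x) ⊆ idl (hsupp (x : ∀ i, H i))) :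
    ∃ φ : (∀ i, H i) →ₗ[S] (∀ i, H i),
      (∀ α : ∀ i, H i, hsupp (φ α) ⊆ idl (hsupp α)) ∧ ∀ x : C, φ (x : ∀ i, H i) = χ x := by
  have coordinate (k : Ω) := RelInjective.exists_extension_of_forall_mem_eq_zero (hΩ k)
    (fun l hl => hH k l hl) C (LinearMap.proj k ∘ₗ χ)
    fun x => hsupp_subset_idl_hsupp_iff.1 (hχ x) k
  choose g hg_zero hg_ext using coordinate
  exact ⟨LinearMap.pi g, fun α => hsupp_subset_idl_hsupp_iff.2 fun k => hg_zero k α,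
    fun x => funext fun k => hg_ext k x⟩

theorem relInjective_of_forall_exists_extension
    (hext : ∀ C : Submodule S (∀ i, H i), ∀ χ : C →ₗ[S] (∀ i, H i),
      (∀ x : C, hsupp (χ x) ⊆ idl (hsupp (x : ∀ i, H i))) →
      ∃ φ : (∀ i, H i) →ₗ[S] (∀ i, H i), ∀ x : C, φ (x : ∀ i, H i) = χ x)
    {k l : Ω} (hkl : k ≤ l) : RelInjective S (H l) (H k) := by
  classical
  intro A f
  let e : A ≃ₗ[S] A.map (LinearMap.single S H l) :=
    Submodule.equivMapOfInjective _ (Pi.single_injective l) A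
  let χ : A.map (LinearMap.single S H l) →ₗ[S] (∀ i, H i) :=
    LinearMap.single S H k ∘ₗ f ∘ₗ e.symm
  have he (a : A) : (e a : ∀ i, H i) = Pi.single l (a : H l) := rfl
  have hχe (a : A) : χ (e a) = Pi.single k (f a) := by simp [χ]
  have hχ (x) : hsupp (χ x) ⊆ idl (hsupp (x : ∀ i, H i)) := by
    obtain ⟨a, rfl⟩ := e.surjective x
    rw [hsupp_subset_idl_hsupp_iff, he, hχe]
    intro j hj
    obtain rfl | hjk := eq_or_ne j k
    · have ha : a = 0 := Subtype.ext (by simpa using hj l hkl)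
      simp [ha]
    · exact Pi.single_eq_of_ne hjk _
  obtain ⟨φ, hφ⟩ := hext _ χ hχ
  refine ⟨LinearMap.proj k ∘ₗ φ ∘ₗ LinearMap.single S H l, fun a => ?_⟩
  calc φ (Pi.single l (a : H l)) k = χ (e a) k := congr_fun (hφ (e a)) k
    _ = f a := by rw [hχe, Pi.single_eq_same]

end Support

theorem stmt8_general {Ω : Type*} [PartialOrder Ω] (hΩ : ∀ k : Ω, (Set.Ici k).Finite)
    {S : Type*} [Ring S] {H : Ω → Type*} [∀ i, AddCommGroup (H i)] [∀ i, Module S (H i)] :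
    List.TFAE [
      ∀ C : Submodule S (∀ i, H i), ∀ χ : C →ₗ[S] (∀ i, H i),
        (∀ x : C, hsupp (χ x) ⊆ idl (hsupp (x : ∀ i, H i))) →
        ∃ φ : (∀ i, H i) →ₗ[S] (∀ i, H i),
          (∀ α : ∀ i, H i, hsupp (φ α) ⊆ idl (hsupp α)) ∧
          ∀ x : C, φ (x : ∀ i, H i) = χ x,
      ∀ C : Submodule S (∀ i, H i), ∀ χ : C →ₗ[S] (∀ i, H i),
        (∀ x : C, hsupp (χ x) ⊆ idl (hsupp (x : ∀ i, H i))) →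
        ∃ φ : (∀ i, H i) →ₗ[S] (∀ i, H i), ∀ x : C, φ (x : ∀ i, H i) = χ x,
      ∀ k l : Ω, k ≤ l → RelInjective S (H l) (H k)] := by
  tfae_have 1 → 2 := fun h C χ hχ => (h C χ hχ).imp fun _ hφ => hφ.2
  tfae_have 2 → 3 := fun h _ _ hkl => relInjective_of_forall_exists_extension h hkl
  tfae_have 3 → 1 := exists_support_preserving_extension hΩ
  tfae_finish

theorem stmt8 {Ω : Type*} [Fintype Ω] [Nonempty Ω] [PartialOrder Ω]
    {S : Type*} [Ring S] {H : Ω → Type*} [∀ i, AddCommGroup (H i)] [∀ i, Module S (H i)] :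
    -- (1): extension within the ring `R`
    ((∀ C : Submodule S (∀ i, H i), ∀ χ : C →ₗ[S] (∀ i, H i),
        (∀ x : C, hsupp (χ x) ⊆ idl (hsupp (x : ∀ i, H i))) →
        ∃ φ : (∀ i, H i) →ₗ[S] (∀ i, H i),
          (∀ α : ∀ i, H i, hsupp (φ α) ⊆ idl (hsupp α)) ∧
          ∀ x : C, φ (x : ∀ i, H i) = χ x) ↔
      -- (2): extension within `End_S(H)`
      (∀ C : Submodule S (∀ i, H i), ∀ χ : C →ₗ[S] (∀ i, H i),
        (∀ x : C, hsupp (χ x) ⊆ idl (hsupp (x : ∀ i, H i))) →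
        ∃ φ : (∀ i, H i) →ₗ[S] (∀ i, H i), ∀ x : C, φ (x : ∀ i, H i) = χ x)) ∧
    ((∀ C : Submodule S (∀ i, H i), ∀ χ : C →ₗ[S] (∀ i, H i),
        (∀ x : C, hsupp (χ x) ⊆ idl (hsupp (x : ∀ i, H i))) →
        ∃ φ : (∀ i, H i) →ₗ[S] (∀ i, H i), ∀ x : C, φ (x : ∀ i, H i) = χ x) ↔
      -- (3): `H k` is `H l`-injective whenever `k ≼ l`
      (∀ k l : Ω, k ≤ l →
        ∀ A : Submodule S (H l), ∀ f : A →ₗ[S] H k,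
          ∃ g : H l →ₗ[S] H k, ∀ a : A, g a = f a)) :=
  have h := stmt8_general (S := S) (H := H) fun k => Set.toFinite (Set.Ici k)
  ⟨h.out 0 1, h.out 1 2⟩
end
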